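/- Let C be a quasiminimal pregeometry class, H ∈ C, X ⊆ H countable, and a, b ∈ H \ cl(X). Then a and b realise the same σ-type over X: for every L_{ω₁,ω}-formula φ(v) with parameters from X, H ⊨ φ(a) if and only if H ⊨ φ(b). -/

import Mathlib

open FirstOrder FirstOrder.Language Set Cardinal



universe u u' v w

namespace QM

variable {L : FirstOrder.Language.{v, w}}

/-- Formulas of `L_{ω₁,ω}`: built from atomic formulas by negation, countable
conjunction (indexed by `ℕ`), and universal quantification; `α` is the type of free
variables and `n` counts the de Bruijn bound variables. Countable disjunctions and
the existential quantifier are definable via negation. -/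
inductive InfFormula (L : FirstOrder.Language.{v, w}) (α : Type u) : ℕ → Type (max u v w)
  | falsum {n : ℕ} : InfFormula L α n
  | equal {n : ℕ} (t₁ t₂ : L.Term (α ⊕ (Fin n))) : InfFormula L α n
  | rel {n l : ℕ} (R : L.Relations l) (ts : Fin l → L.Term (α ⊕ (Fin n))) : InfFormula L α n
  | not {n : ℕ} (φ : InfFormula L α n) : InfFormula L α n
  | iInf {n : ℕ} (φ : ℕ → InfFormula L α n) : InfFormula L α n
  | all {n : ℕ} (φ : InfFormula L α (n + 1)) : InfFormula L α n

/-- Satisfaction of an `L_{ω₁,ω}`-formula in an `L`-structure `M`, given an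
assignment `v` of the free variables and `xs` of the bound variables. -/
def InfFormula.Realize {M : Type u'} [L.Structure M] {α : Type u} :
    ∀ {n : ℕ}, InfFormula L α n → (α → M) → (Fin n → M) → Prop
  | _, .falsum, _, _ => False
  | _, .equal t₁ t₂, v, xs => t₁.realize (Sum.elim v xs) = t₂.realize (Sum.elim v xs)
  | _, .rel R ts, v, xs => Structure.RelMap R (fun i => (ts i).realize (Sum.elim v xs))
  | _, .not φ, v, xs => ¬ φ.Realize v xs
  | _, .iInf φ, v, xs => ∀ i : ℕ, (φ i).Realize v xs
  | _, .all φ, v, xs => ∀ x : M, φ.Realize v (Fin.snoc xs x)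

/-- An `L_{ω₁,ω}`-sentence. -/
abbrev InfSentence (L : FirstOrder.Language.{v, w}) := InfFormula L PEmpty 0

/-- Satisfaction of an `L_{ω₁,ω}`-sentence. -/
def InfSentence.RealizeS (M : Type u') [L.Structure M] (φ : InfSentence L) : Prop :=
  InfFormula.Realize (M := M) φ PEmpty.elim (fun i => i.elim0)

/-- Satisfaction of an `L_{ω₁,ω}`-formula with parameters from the set `A`
and `m` free variables `v̄`, at the tuple `v`. -/
def InfFormula.RealizeP {M : Type u'} [L.Structure M] {A : Set M} {m : ℕ}
    (φ : InfFormula L (↥A ⊕ Fin m) 0) (v : Fin m → M) : Prop :=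
  φ.Realize (Sum.elim Subtype.val v) (fun i => i.elim0)

/-- The domain of a partial map, viewed as a graph (set of pairs). -/
def pdom {H : Type*} {H' : Type*} (p : Set (H × H')) : Set H := Prod.fst '' p

/-- The image of a partial map, viewed as a graph (set of pairs). -/
def pimg {H : Type*} {H' : Type*} (p : Set (H × H')) : Set H' := Prod.snd '' p

/-- The image of a set `X` under a partial map given as a graph. -/
def pimage {H : Type*} {H' : Type*} (p : Set (H × H')) (X : Set H) : Set H' :=
  {b | ∃ a ∈ X, (a, b) ∈ p}

/-- A partial map (given as its graph `p`) is a partial embedding if it preserves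
quantifier-free first-order formulas. (This forces `p` to be the graph of an
injective partial function.) -/
def IsPartialEmbedding {H : Type u} {H' : Type u} [L.Structure H] [L.Structure H']
    (p : Set (H × H')) : Prop :=
  ∀ (n : ℕ) (φ : L.Formula (Fin n)), BoundedFormula.IsQF φ →
    ∀ (a : Fin n → H) (b : Fin n → H'), (∀ i, (a i, b i) ∈ p) →
      (φ.Realize a ↔ φ.Realize b)

/-- A partial map is a σ-embedding if it is a partial embedding and preserves all
`L_{ω₁,ω}`-formulas with (possibly infinitely many) parameters from its domain;
equivalently `⟨M, m⟩_{m ∈ dom p} ≡_{ω₁,ω} ⟨N, p(m)⟩_{m ∈ dom p}`. -/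
def IsSigmaEmbedding {H : Type u} {H' : Type u} [L.Structure H] [L.Structure H']
    (p : Set (H × H')) : Prop :=
  IsPartialEmbedding (L := L) p ∧
    ∀ (φ : InfFormula L (↥(pdom p)) 0) (b : ↥(pdom p) → H'),
      (∀ x : ↥(pdom p), ((x : H), b x) ∈ p) →
        (φ.Realize Subtype.val (fun i => i.elim0) ↔ φ.Realize b (fun i => i.elim0))

/-- A pregeometry (combinatorial geometry) on a set. -/
structure IsPregeometry {α : Type*} (cl : Set α → Set α) : Prop where
  subset_cl : ∀ X, X ⊆ cl X
  mono : ∀ ⦃X Y : Set α⦄, X ⊆ Y → cl X ⊆ cl Y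
  idem : ∀ X, cl (cl X) = cl X
  finChar : ∀ (X : Set α) (y : α), y ∈ cl X → ∃ F : Finset α, ↑F ⊆ X ∧ y ∈ cl ↑F
  exchange : ∀ (X : Set α) (a b : α), a ∈ cl (X ∪ {b}) → a ∉ cl X → b ∈ cl (X ∪ {a})

/-- A pair `⟨H, cl_H⟩` of an `L`-structure and a closure operator on it. -/
structure QMObj (L : FirstOrder.Language.{v, w}) where
  carrier : Type u
  [str : L.Structure carrier]
  cl : Set carrier → Set carrier

attribute [instance] QMObj.str

/-- `G` is countable and closed, or empty. -/
def CCOE (H : QMObj.{u} L) (G : Set H.carrier) : Prop :=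
  (G.Countable ∧ H.cl G = G) ∨ G = ∅

/-- The axioms for a class of pairs `⟨H, cl_H⟩` to be a quasiminimal pregeometry class. -/
structure IsQMClass (C : Set (QMObj.{u} L)) : Prop where
  /-- Closure under isomorphisms, transporting the closure operator. -/
  iso_closed : ∀ H ∈ C, ∀ (N : Type u) [_iN : L.Structure N] (f : H.carrier ≃[L] N),
      (⟨N, fun X => f '' (H.cl (f ⁻¹' X))⟩ : QMObj L) ∈ C
  /-- Any two members satisfy the same quantifier-free sentences. -/
  qf_theory : ∀ H ∈ C, ∀ H' ∈ C, ∀ (φ : L.Sentence), BoundedFormula.IsQF φ →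
      (H.carrier ⊨ φ ↔ H'.carrier ⊨ φ)
  /-- Each `cl_H` is a pregeometry. -/
  pregeom : ∀ H ∈ C, IsPregeometry H.cl
  /-- The closure of a finite set is countable. -/
  cl_finite_countable : ∀ H ∈ C, ∀ X : Set H.carrier, X.Finite → (H.cl X).Countable
  /-- The closure of any set is (the underlying set of) a substructure which, with the
  restricted closure operator, is again a member of the class. -/
  cl_mem : ∀ H ∈ C, ∀ X : Set H.carrier, ∃ S : L.Substructure H.carrier,
      (S : Set H.carrier) = H.cl X ∧
      (⟨↥S, fun Y => Subtype.val ⁻¹' (H.cl (Subtype.val '' Y))⟩ : QMObj L) ∈ C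
  /-- Partial embeddings preserve and reflect the closure relation. -/
  cl_embedding : ∀ H ∈ C, ∀ H' ∈ C, ∀ (p : Set (H.carrier × H'.carrier)),
      IsPartialEmbedding (L := L) p → ∀ X ⊆ pdom p, ∀ (y : H.carrier) (y' : H'.carrier),
        (y, y') ∈ p → (y ∈ H.cl X ↔ y' ∈ H'.cl (pimage p X))
  /-- ℵ₀-homogeneity over countable closed models, part (i): an isomorphism between
  countable closed (or empty) sets extends by any pair of independent points. -/
  homogeneity₁ : ∀ H ∈ C, ∀ H' ∈ C, ∀ (g : Set (H.carrier × H'.carrier)),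
      CCOE H (pdom g) → CCOE H' (pimg g) → IsPartialEmbedding (L := L) g →
      ∀ (x : H.carrier) (x' : H'.carrier), x ∉ H.cl (pdom g) → x' ∉ H'.cl (pimg g) →
        IsPartialEmbedding (L := L) (g ∪ {(x, x')})
  /-- ℵ₀-homogeneity over countable closed models, part (ii). -/
  homogeneity₂ : ∀ H ∈ C, ∀ H' ∈ C, ∀ (g f : Set (H.carrier × H'.carrier)),
      CCOE H (pdom g) → CCOE H' (pimg g) → IsPartialEmbedding (L := L) g →
      (pdom f).Finite → IsPartialEmbedding (L := L) (g ∪ f) →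
      ∀ y ∈ H.cl (pdom f ∪ pdom g), ∃ y' : H'.carrier,
        IsPartialEmbedding (L := L) (g ∪ f ∪ {(y, y')})


/-- `p` is a σ-type over `A` in `m` variables: every countable subset of `p` is
consistent with the structure, i.e. simultaneously satisfiable. -/
def IsSigmaType {M : Type u'} [L.Structure M] {A : Set M} {m : ℕ}
    (p : Set (InfFormula L (↥A ⊕ Fin m) 0)) : Prop :=
  ∀ Φ ⊆ p, Φ.Countable → ∃ v : Fin m → M, ∀ φ ∈ Φ, φ.RealizeP v

/-- A σ-type `p` is isolated if there is a consistent `L_{ω₁,ω}`-formula `ψ(x̄)`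
(possibly with parameters from `M`) such that `ψ` implies every formula of `p`. -/
def IsIsolated {M : Type u'} [L.Structure M] {A : Set M} {m : ℕ}
    (p : Set (InfFormula L (↥A ⊕ Fin m) 0)) : Prop :=
  ∃ ψ : InfFormula L (M ⊕ Fin m) 0,
    (∃ v : Fin m → M, ψ.Realize (Sum.elim id v) (fun i => i.elim0)) ∧
    ∀ φ ∈ p, ∀ v : Fin m → M, ψ.Realize (Sum.elim id v) (fun i => i.elim0) → φ.RealizeP v

/-- A σ-type `p` is realised if some tuple satisfies every formula of `p`. -/
def IsRealized {M : Type u'} [L.Structure M] {A : Set M} {m : ℕ}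
    (p : Set (InfFormula L (↥A ⊕ Fin m) 0)) : Prop :=
  ∃ v : Fin m → M, ∀ φ ∈ p, φ.RealizeP v

/-- `B` is an independent subset of the pregeometry `⟨H, cl_H⟩`. -/
def IsIndep (H : QMObj.{u} L) (B : Set H.carrier) : Prop :=
  ∀ x ∈ B, x ∉ H.cl (B \ {x})

/-- `B` is a basis of the pregeometry `⟨H, cl_H⟩`: a maximal independent subset. -/
def IsBasis (H : QMObj.{u} L) (B : Set H.carrier) : Prop :=
  IsIndep H B ∧ ∀ B' : Set H.carrier, B ⊆ B' → IsIndep H B' → B' = B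

/-- The model-theoretic algebraic closure of `X` in `M`: the set of elements
satisfying some first-order formula with parameters in `X` having finitely many
solutions. -/
def aclS (L : FirstOrder.Language.{v, w}) (M : Type u) [L.Structure M] (X : Set M) :
    Set M :=
  {y | ∃ (n : ℕ) (φ : L.BoundedFormula (Fin n) 1) (v : Fin n → M),
    (∀ i, v i ∈ X) ∧ φ.Realize v ![y] ∧ {z : M | φ.Realize v ![z]}.Finite}


section Helpers

theorem pe_fun {H H' : Type u} [L.Structure H] [L.Structure H'] {p : Set (H × H')}
    (hp : IsPartialEmbedding (L := L) p) {a a' : H} {b b' : H'}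
    (h : (a, b) ∈ p) (h' : (a', b') ∈ p) : a = a' ↔ b = b' := by
  have := hp 2 (Term.equal (L := L) (Term.var 0) (Term.var 1))
    (BoundedFormula.IsAtomic.equal _ _).isQF ![a, a'] ![b, b']
    (by intro i; fin_cases i <;> simp [h, h'])
  simpa using this

theorem pe_rel {H H' : Type u} [L.Structure H] [L.Structure H'] {p : Set (H × H')}
    (hp : IsPartialEmbedding (L := L) p) {l : ℕ} (R : L.Relations l) (x : Fin l → H)
    (y : Fin l → H') (h : ∀ i, (x i, y i) ∈ p) :
    Structure.RelMap R x ↔ Structure.RelMap R y := by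
  have := hp l (R.formula (fun i => Term.var i))
    (BoundedFormula.IsAtomic.rel _ _).isQF x y h
  simpa [Formula.realize_rel] using this

theorem pe_func {H H' : Type u} [L.Structure H] [L.Structure H'] {p : Set (H × H')}
    (hp : IsPartialEmbedding (L := L) p) {l : ℕ} (f : L.Functions l) (x : Fin l → H)
    (y : Fin l → H') (h : ∀ i, (x i, y i) ∈ p) (z : H') (hz : (Structure.funMap f x, z) ∈ p) :
    Structure.funMap f y = z := by
  have := hp (l + 1) (Formula.graph f)
    (BoundedFormula.IsAtomic.equal _ _).isQF (Fin.cons (Structure.funMap f x) x) (Fin.cons z y)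
    (by intro i; refine Fin.cases ?_ ?_ i <;> simp [h, hz])
  rw [Formula.realize_graph, Formula.realize_graph] at this
  exact this.1 rfl

theorem pe_swap {H H' : Type u} [L.Structure H] [L.Structure H'] {p : Set (H × H')}
    (hp : IsPartialEmbedding (L := L) p) :
    IsPartialEmbedding (L := L) (Prod.swap ⁻¹' p : Set (H' × H)) := by
  intro n φ hφ a b hab
  exact (hp n φ hφ b a hab).symm

theorem pe_mono {H H' : Type u} [L.Structure H] [L.Structure H'] {p q : Set (H × H')}
    (hp : IsPartialEmbedding (L := L) p) (h : q ⊆ p) : IsPartialEmbedding (L := L) q :=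
  fun n φ hφ a b hab => hp n φ hφ a b (fun i => h (hab i))

theorem pdom_swap {H H' : Type u} (p : Set (H × H')) :
    pdom (Prod.swap ⁻¹' p : Set (H' × H)) = pimg p := by
  ext x; simp [pdom, pimg]

theorem pimg_swap {H H' : Type u} (p : Set (H × H')) :
    pimg (Prod.swap ⁻¹' p : Set (H' × H)) = pdom p := by
  ext x; simp [pdom, pimg]

theorem pdom_mono {H H' : Type u} {p q : Set (H × H')} (h : p ⊆ q) : pdom p ⊆ pdom q :=
  Set.image_mono h

theorem pimg_mono {H H' : Type u} {p q : Set (H × H')} (h : p ⊆ q) : pimg p ⊆ pimg q :=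
  Set.image_mono h

theorem pdom_union {H H' : Type u} (p q : Set (H × H')) : pdom (p ∪ q) = pdom p ∪ pdom q :=
  Set.image_union _ _ _

theorem pimg_union {H H' : Type u} (p q : Set (H × H')) : pimg (p ∪ q) = pimg p ∪ pimg q :=
  Set.image_union _ _ _

theorem pimage_pdom_subset {H H' : Type u} [L.Structure H] [L.Structure H'] {p r : Set (H × H')}
    (hp : IsPartialEmbedding (L := L) p) (hr : r ⊆ p) : pimage p (pdom r) ⊆ pimg r := by
  rintro b ⟨a, ⟨⟨a', b'⟩, h, rfl⟩, hab⟩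
  have := (pe_fun hp (hr h) hab).1 rfl
  subst this
  exact ⟨_, h, rfl⟩

/-- countable closed set -/
def CC (H : QMObj.{u} L) (G : Set H.carrier) : Prop := G.Countable ∧ H.cl G = G

theorem cl_countable {C : Set (QMObj.{u} L)} (hC : IsQMClass C) {H : QMObj.{u} L} (hH : H ∈ C)
    {X : Set H.carrier} (hX : X.Countable) : (H.cl X).Countable := by
  have hsub : H.cl X ⊆ ⋃ F ∈ {F : Set H.carrier | F.Finite ∧ F ⊆ X}, H.cl F := by
    intro y hy
    obtain ⟨F, hF, hyF⟩ := (hC.pregeom H hH).finChar X y hy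
    simp only [Set.mem_iUnion]
    exact ⟨F, ⟨F.finite_toSet, hF⟩, hyF⟩
  refine Set.Countable.mono hsub (Set.Countable.biUnion ?_ ?_)
  · exact Set.countable_setOf_finite_subset hX
  · intro F hF
    exact hC.cl_finite_countable H hH F hF.1

/-- Finite approximations in the back and forth construction. -/
def Good (H : QMObj.{u} L) (g r f : Set (H.carrier × H.carrier)) : Prop :=
  f.Finite ∧ r ⊆ g ∪ f ∧ IsPartialEmbedding (L := L) (g ∪ f) ∧
    pdom f ⊆ H.cl (pdom r) ∧ pimg f ⊆ H.cl (pimg r)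

theorem good_forth {C : Set (QMObj.{u} L)} (hC : IsQMClass C) {H : QMObj.{u} L} (hH : H ∈ C)
    {g r f : Set (H.carrier × H.carrier)} (hd : CC H (pdom g)) (hi : CC H (pimg g))
    (hf : Good H g r f) (z : H.carrier) (hz : z ∈ H.cl (pdom r)) :
    ∃ z', Good H g r (f ∪ {(z, z')}) := by
  obtain ⟨hfin, hr, hpe, h1, h2⟩ := hf
  have P := hC.pregeom H hH
  have hzz : z ∈ H.cl (pdom f ∪ pdom g) := by
    refine P.mono ?_ hz
    rw [← pdom_union, Set.union_comm]
    exact pdom_mono hr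
  obtain ⟨z', hz'⟩ := hC.homogeneity₂ H hH H hH g f (Or.inl hd) (Or.inl hi)
    (pe_mono hpe Set.subset_union_left) (hfin.image _) hpe z hzz
  have hrq : r ⊆ g ∪ f ∪ {(z, z')} := hr.trans Set.subset_union_left
  have hcl : z' ∈ H.cl (pimg r) := by
    have := (hC.cl_embedding H hH H hH _ hz' (pdom r) (pdom_mono hrq) z z'
      (Or.inr rfl)).1 hz
    exact P.mono (pimage_pdom_subset hz' hrq) this
  refine ⟨z', hfin.union (Set.finite_singleton _), ?_, ?_, ?_, ?_⟩
  · rwa [← Set.union_assoc]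
  · rwa [← Set.union_assoc]
  · rw [pdom_union]
    refine Set.union_subset h1 ?_
    simpa [pdom] using hz
  · rw [pimg_union]
    refine Set.union_subset h2 ?_
    simpa [pimg] using hcl

theorem good_swap {H : QMObj.{u} L} {g r f : Set (H.carrier × H.carrier)} (hf : Good H g r f) :
    Good H (Prod.swap ⁻¹' g) (Prod.swap ⁻¹' r) (Prod.swap ⁻¹' f) := by
  obtain ⟨hfin, hr, hpe, h1, h2⟩ := hf
  refine ⟨hfin.preimage Prod.swap_injective.injOn, Set.preimage_mono hr, pe_swap hpe, ?_, ?_⟩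
  · rwa [pdom_swap, pdom_swap]
  · rwa [pimg_swap, pimg_swap]

theorem good_back {C : Set (QMObj.{u} L)} (hC : IsQMClass C) {H : QMObj.{u} L} (hH : H ∈ C)
    {g r f : Set (H.carrier × H.carrier)} (hd : CC H (pdom g)) (hi : CC H (pimg g))
    (hf : Good H g r f) (z : H.carrier) (hz : z ∈ H.cl (pimg r)) :
    ∃ z', Good H g r (f ∪ {(z', z)}) := by
  obtain ⟨z', h⟩ := good_forth hC hH (g := Prod.swap ⁻¹' g) (r := Prod.swap ⁻¹' r)
    (f := Prod.swap ⁻¹' f) (by rwa [pdom_swap]) (by rwa [pimg_swap]) (good_swap hf) z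
    (by rwa [pdom_swap])
  refine ⟨z', ?_⟩
  have := good_swap h
  convert this using 1
  · ext ⟨x, y⟩
    simp
  · ext ⟨x, y⟩
    simp
  · ext ⟨x, y⟩
    simp [and_comm]

/-- An isomorphism of countable closed sets extended by one pair extends to the closures. -/
theorem extend_cl {C : Set (QMObj.{u} L)} (hC : IsQMClass C) {H : QMObj.{u} L} (hH : H ∈ C)
    {g : Set (H.carrier × H.carrier)} (hd : CC H (pdom g)) (hi : CC H (pimg g))
    (y y' : H.carrier) (hpe : IsPartialEmbedding (L := L) (g ∪ {(y, y')})) :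
    ∃ h, g ∪ {(y, y')} ⊆ h ∧ IsPartialEmbedding (L := L) h ∧
      pdom h = H.cl (pdom (g ∪ {(y, y')})) ∧ pimg h = H.cl (pimg (g ∪ {(y, y')})) := by
  have P := hC.pregeom H hH
  set r := g ∪ {(y, y')} with hr
  have cA : (H.cl (pdom r)).Countable := by
    apply cl_countable hC hH
    rw [hr, pdom_union]
    exact hd.1.union ((Set.finite_singleton _).image _).countable
  have cB : (H.cl (pimg r)).Countable := by
    apply cl_countable hC hH
    rw [hr, pimg_union]
    exact hi.1.union ((Set.finite_singleton _).image _).countable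
  haveI := cA.to_subtype
  haveI := cB.to_subtype
  letI : Encodable (H.cl (pdom r) ⊕ H.cl (pimg r)) := Encodable.ofCountable _
  let Q := {f : Set (H.carrier × H.carrier) // Good H g r f}
  let q0 : Q := ⟨{(y, y')}, Set.finite_singleton _, le_rfl, hpe,
    (pdom_mono Set.subset_union_right).trans (P.subset_cl _),
    (pimg_mono Set.subset_union_right).trans (P.subset_cl _)⟩
  let D : H.cl (pdom r) ⊕ H.cl (pimg r) → Order.Cofinal Q := fun s => match s with
    | Sum.inl z => ⟨{f | z.1 ∈ pdom f.1}, fun f => by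
        obtain ⟨z', h⟩ := good_forth hC hH hd hi f.2 z.1 z.2
        exact ⟨⟨_, h⟩, ⟨(z.1, z'), Or.inr rfl, rfl⟩, Set.subset_union_left⟩⟩
    | Sum.inr z => ⟨{f | z.1 ∈ pimg f.1}, fun f => by
        obtain ⟨z', h⟩ := good_back hC hH hd hi f.2 z.1 z.2
        exact ⟨⟨_, h⟩, ⟨(z', z.1), Or.inr rfl, rfl⟩, Set.subset_union_left⟩⟩
  let s : ℕ → Q := Order.sequenceOfCofinals q0 D
  have hmono : Monotone s := Order.sequenceOfCofinals.monotone q0 D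
  refine ⟨⋃ n, (g ∪ (s n).1), ?_, ?_, ?_, ?_⟩
  · exact Set.subset_iUnion_of_subset 0 (s 0).2.2.1
  · intro n φ hφ a b hab
    have : ∀ i, ∃ k, (a i, b i) ∈ g ∪ (s k).1 := fun i => Set.mem_iUnion.1 (hab i)
    choose k hk using this
    refine (s (Finset.univ.sup k)).2.2.2.1 n φ hφ a b (fun i => ?_)
    exact Set.union_subset_union_right g (hmono (Finset.le_sup (Finset.mem_univ i))) (hk i)
  · apply Set.Subset.antisymm
    · rintro x ⟨p, hp, rfl⟩
      obtain ⟨n, hn | hn⟩ := Set.mem_iUnion.1 hp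
      · exact P.subset_cl _ ⟨p, Or.inl hn, rfl⟩
      · exact (s n).2.2.2.2.1 ⟨p, hn, rfl⟩
    · intro z hz
      obtain ⟨p, hp, e⟩ := Order.sequenceOfCofinals.encode_mem q0 D (Sum.inl ⟨z, hz⟩)
      exact ⟨p, Set.mem_iUnion.2 ⟨_, Or.inr hp⟩, e⟩
  · apply Set.Subset.antisymm
    · rintro x ⟨p, hp, rfl⟩
      obtain ⟨n, hn | hn⟩ := Set.mem_iUnion.1 hp
      · exact P.subset_cl _ ⟨p, Or.inl hn, rfl⟩
      · exact (s n).2.2.2.2.2 ⟨p, hn, rfl⟩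
    · intro z hz
      obtain ⟨p, hp, e⟩ := Order.sequenceOfCofinals.encode_mem q0 D (Sum.inr ⟨z, hz⟩)
      exact ⟨p, Set.mem_iUnion.2 ⟨_, Or.inr hp⟩, e⟩

/-- Automorphisms of a countable closed set. -/
def Aut (H : QMObj.{u} L) (p : Set (H.carrier × H.carrier)) : Prop :=
  IsPartialEmbedding (L := L) p ∧ CC H (pdom p) ∧ pimg p = pdom p

theorem aut_swap {H : QMObj.{u} L} {p : Set (H.carrier × H.carrier)} (hp : Aut H p) :
    Aut H (Prod.swap ⁻¹' p) := by
  obtain ⟨h1, h2, h3⟩ := hp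
  refine ⟨pe_swap h1, ?_, ?_⟩
  · rwa [pdom_swap, h3]
  · rw [pdom_swap, pimg_swap, h3]

theorem cc_cl {C : Set (QMObj.{u} L)} (hC : IsQMClass C) {H : QMObj.{u} L} (hH : H ∈ C)
    {X : Set H.carrier} (hX : X.Countable) : CC H (H.cl X) :=
  ⟨cl_countable hC hH hX, (hC.pregeom H hH).idem X⟩

theorem pdom_single {H : Type u} (g : Set (H × H)) (a b : H) :
    pdom (g ∪ {(a, b)}) = pdom g ∪ {a} := by
  rw [pdom_union]; simp [pdom]

theorem pimg_single {H : Type u} (g : Set (H × H)) (a b : H) :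
    pimg (g ∪ {(a, b)}) = pimg g ∪ {b} := by
  rw [pimg_union]; simp [pimg]

theorem aut_forth {C : Set (QMObj.{u} L)} (hC : IsQMClass C) {H : QMObj.{u} L} (hH : H ∈ C)
    {p : Set (H.carrier × H.carrier)} (hp : Aut H p) (z : H.carrier) :
    ∃ q z', p ⊆ q ∧ Aut H q ∧ (z, z') ∈ q := by
  obtain ⟨h1, h2, h3⟩ := hp
  by_cases hz : z ∈ pdom p
  · obtain ⟨⟨z, z'⟩, h, rfl⟩ := hz
    exact ⟨p, z', le_rfl, ⟨h1, h2, h3⟩, h⟩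
  · have hi : CC H (pimg p) := by rwa [h3]
    have hpe := hC.homogeneity₁ H hH H hH p (Or.inl h2) (Or.inl hi) h1 z z
      (by rwa [h2.2]) (by rwa [h3, h2.2])
    obtain ⟨h, hs, hh, hd, him⟩ := extend_cl hC hH h2 hi z z hpe
    rw [pdom_single] at hd
    rw [pimg_single, h3] at him
    refine ⟨h, z, Set.subset_union_left.trans hs, ⟨hh, ?_, him.trans hd.symm⟩, hs (Or.inr rfl)⟩
    rw [hd]
    exact cc_cl hC hH (h2.1.union (Set.countable_singleton _))

theorem aut_term {C : Set (QMObj.{u} L)} (hC : IsQMClass C) {H : QMObj.{u} L} (hH : H ∈ C)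
    {p : Set (H.carrier × H.carrier)} (hp : Aut H p) {β : Type*} (v v' : β → H.carrier)
    (hv : ∀ x, (v x, v' x) ∈ p) (t : L.Term β) : (t.realize v, t.realize v') ∈ p := by
  induction t with
  | var x => exact hv x
  | func f ts ih =>
    simp only [Term.realize_func]
    obtain ⟨S, hS, -⟩ := hC.cl_mem H hH (pdom p)
    rw [hp.2.1.2] at hS
    have hmem : Structure.funMap f (fun i => (ts i).realize v) ∈ S := by
      apply S.fun_mem f
      intro i
      change _ ∈ (S : Set H.carrier)
      rw [hS]
      exact ⟨_, ih i, rfl⟩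
    rw [← SetLike.mem_coe, hS] at hmem
    obtain ⟨⟨x, z⟩, hx, e⟩ := hmem
    simp only at e
    subst e
    rw [pe_func hp.1 f _ _ ih z hx]
    exact hx

theorem aut_realize {C : Set (QMObj.{u} L)} (hC : IsQMClass C) {H : QMObj.{u} L} (hH : H ∈ C)
    {α : Type u'} {n : ℕ} (φ : InfFormula L α n) :
    ∀ (p : Set (H.carrier × H.carrier)) (_ : Aut H p) (v v' : α → H.carrier)
      (xs xs' : Fin n → H.carrier), (∀ x, (v x, v' x) ∈ p) → (∀ i, (xs i, xs' i) ∈ p) →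
      (φ.Realize v xs ↔ φ.Realize v' xs') := by
  induction φ with
  | falsum => intros; rfl
  | equal t₁ t₂ =>
    intro p hp v v' xs xs' hv hx
    have hvx : ∀ s, (Sum.elim v xs s, Sum.elim v' xs' s) ∈ p := by
      rintro (s | s)
      · exact hv s
      · exact hx s
    exact pe_fun hp.1 (aut_term hC hH hp _ _ hvx t₁) (aut_term hC hH hp _ _ hvx t₂)
  | rel R ts =>
    intro p hp v v' xs xs' hv hx
    have hvx : ∀ s, (Sum.elim v xs s, Sum.elim v' xs' s) ∈ p := by
      rintro (s | s)
      · exact hv s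
      · exact hx s
    exact pe_rel hp.1 R _ _ (fun i => aut_term hC hH hp _ _ hvx (ts i))
  | not φ ih =>
    intro p hp v v' xs xs' hv hx
    exact not_congr (ih p hp v v' xs xs' hv hx)
  | iInf φ ih =>
    intro p hp v v' xs xs' hv hx
    exact forall_congr' (fun i => ih i p hp v v' xs xs' hv hx)
  | all φ ih =>
    have key : ∀ (p : Set (H.carrier × H.carrier)) (_ : Aut H p) (v v' : α → H.carrier)
        (xs xs' : Fin _ → H.carrier), (∀ x, (v x, v' x) ∈ p) → (∀ i, (xs i, xs' i) ∈ p) →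
        (∀ x, φ.Realize v' (Fin.snoc xs' x)) → ∀ x, φ.Realize v (Fin.snoc xs x) := by
      intro p hp v v' xs xs' hv hx h x
      obtain ⟨q, x', hpq, hq, hxq⟩ := aut_forth hC hH hp x
      refine (ih q hq v v' _ (Fin.snoc xs' x') (fun s => hpq (hv s)) ?_).2 (h x')
      intro i
      refine Fin.lastCases ?_ (fun j => ?_) i
      · simpa using hxq
      · simpa using hpq (hx j)
    intro p hp v v' xs xs' hv hx
    exact ⟨key _ (aut_swap hp) v' v xs' xs hv hx, key p hp v v' xs xs' hv hx⟩

theorem exists_aut {C : Set (QMObj.{u} L)} (hC : IsQMClass C) {H : QMObj.{u} L} (hH : H ∈ C)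
    {X : Set H.carrier} (hX : X.Countable) (a b : H.carrier) (ha : a ∉ H.cl X)
    (hb : b ∉ H.cl X) : ∃ p, Aut H p ∧ (∀ x ∈ X, (x, x) ∈ p) ∧ (a, b) ∈ p := by
  have P := hC.pregeom H hH
  set G := H.cl X with hG
  have cG : CC H G := cc_cl hC hH hX
  let g : Set (H.carrier × H.carrier) := {p | p.1 ∈ G ∧ p.1 = p.2}
  have hgd : pdom g = G := by
    ext x; simp [pdom, g]
  have hgi : pimg g = G := by
    ext x; simp [pimg, g]
  have hg : IsPartialEmbedding (L := L) g := by
    intro n φ _ x y hxy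
    have : x = y := funext fun i => (hxy i).2
    rw [this]
  have hd : CC H (pdom g) := by rwa [hgd]
  have hi : CC H (pimg g) := by rwa [hgi]
  have hpe := hC.homogeneity₁ H hH H hH g (Or.inl hd) (Or.inl hi) hg a b
    (by rwa [hd.2, hgd]) (by rwa [hi.2, hgi])
  obtain ⟨h, hs, hh, hhd, hhi⟩ := extend_cl hC hH hd hi a b hpe
  rw [pdom_single, hgd] at hhd
  rw [pimg_single, hgi] at hhi
  have hXg : ∀ x ∈ X, (x, x) ∈ h := fun x hx => hs (Or.inl ⟨P.subset_cl _ hx, rfl⟩)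
  have hab : (a, b) ∈ h := hs (Or.inr rfl)
  have ca : CC H (pdom h) := by
    rw [hhd]; exact cc_cl hC hH (cG.1.union (Set.countable_singleton _))
  have cb : CC H (pimg h) := by
    rw [hhi]; exact cc_cl hC hH (cG.1.union (Set.countable_singleton _))
  have sub : ∀ c d, d ∈ H.cl (G ∪ {c}) → H.cl (G ∪ {d}) ⊆ H.cl (G ∪ {c}) := by
    intro c d hd
    rw [← P.idem (G ∪ {c})]
    apply P.mono
    refine Set.union_subset (Set.subset_union_left.trans (P.subset_cl _)) ?_
    simpa using hd
  by_cases hba : b ∈ H.cl (G ∪ {a})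
  · have hab' := P.exchange G b a hba (by rwa [cG.2])
    refine ⟨h, ⟨hh, ca, ?_⟩, hXg, hab⟩
    rw [hhd, hhi]
    exact Set.Subset.antisymm (sub _ _ hba) (sub _ _ hab')
  · have hab' : a ∉ H.cl (G ∪ {b}) := fun h' => hba (P.exchange G a b h' (by rwa [cG.2]))
    have hpe2 := hC.homogeneity₁ H hH H hH h (Or.inl ca) (Or.inl cb) hh b a
      (by rwa [ca.2, hhd]) (by rwa [cb.2, hhi])
    obtain ⟨k, ks, kk, kd, ki⟩ := extend_cl hC hH ca cb b a hpe2
    have cc : ∀ c d, H.cl (H.cl (G ∪ {c}) ∪ {d}) = H.cl (G ∪ {c, d}) := by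
      intro c d
      apply Set.Subset.antisymm
      · rw [← P.idem (G ∪ {c, d})]
        apply P.mono
        refine Set.union_subset (P.mono ?_) ?_
        · exact Set.union_subset_union_right _ (by simp)
        · simp only [Set.singleton_subset_iff]
          exact P.subset_cl _ (by simp)
      · apply P.mono
        intro x hx
        rcases hx with hx | rfl | hx
        · exact Or.inl (P.subset_cl _ (Or.inl hx))
        · exact Or.inl (P.subset_cl _ (Or.inr rfl))
        · exact Or.inr hx
    refine ⟨k, ⟨kk, ?_, ?_⟩, fun x hx => ks (Or.inl (hXg x hx)), ks (Or.inl hab)⟩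
    · rw [kd, pdom_single]
      exact cc_cl hC hH (ca.1.union (Set.countable_singleton _))
    · rw [kd, ki, pdom_single, pimg_single, hhd, hhi, cc, cc, Set.pair_comm]

end Helpers

/-- If `H ∈ C`, `X ⊆ H` is countable and `a, b ∈ H \ cl(X)`, then `a` and
`b` realise the same σ-type over `X`: they satisfy the same `L_{ω₁,ω}`-formulas with
parameters from `X`. -/
theorem statement_4 {L : FirstOrder.Language.{v, w}} (C : Set (QMObj.{u} L))
    (hC : IsQMClass C) (H : QMObj.{u} L) (hH : H ∈ C)
    (X : Set H.carrier) (hX : X.Countable)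
    (a b : H.carrier) (ha : a ∉ H.cl X) (hb : b ∉ H.cl X)
    (φ : InfFormula L (↥X ⊕ Fin 1) 0) :
    φ.RealizeP (fun _ => a) ↔ φ.RealizeP (fun _ => b) := by
  obtain ⟨p, hp, hx, hab⟩ := exists_aut hC hH hX a b ha hb
  refine aut_realize hC hH φ p hp _ _ _ _ ?_ (fun i => i.elim0)
  rintro (x | x)
  · exact hx x.1 x.2
  · exact hab

end QM
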